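/- For all integers k ≥ 2 and n ≥ 1, the k-uniform expansion K^{(k)}_{n,n} of the complete bipartite graph K_{n,n} is obligatory; that is, every k-uniform hypergraph of chromatic number at least ℵ₁ contains a subhypergraph isomorphic to K^{(k)}_{n,n}. -/

import Mathlib

open Cardinal

universe u

/-- A colouring `f` of the vertices is proper for the edge set `E` if no edge
is monochromatic, i.e. every edge contains two vertices of distinct colours. -/
def IsProperColoring {V : Type u} {α : Type*} (E : Set (Set V)) (f : V → α) : Prop :=
  ∀ e ∈ E, ∃ x ∈ e, ∃ y ∈ e, f x ≠ f y

/-- The chromatic number of the hypergraph `(V, E)`: the least cardinal `κ` such that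
there is a proper colouring of the vertices with `κ` colours. -/
noncomputable def chromaticNumber (V : Type u) (E : Set (Set V)) : Cardinal.{u} :=
  sInf { κ : Cardinal.{u} | ∃ (α : Type u) (f : V → α), #α = κ ∧ IsProperColoring E f }

/-- `(V, E)` contains a subhypergraph isomorphic to the `k`-uniform expansion
`K^{(k)}_{n,n}` of the complete bipartite graph `K_{n,n}`: there are distinct
vertices `x i` and `y j` and an edge `e i j ⊇ {x i, y j}` for every pair `(i, j)`,
such that two distinct such edges intersect exactly in the corresponding
intersection of the underlying graph edges. -/
def ContainsExpansionKnn (k n : ℕ) {V : Type u} (E : Set (Set V)) : Prop :=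
  ∃ (x y : Fin n → V) (e : Fin n → Fin n → Set V),
    Function.Injective (Sum.elim x y) ∧
    (∀ i j, e i j ∈ E) ∧
    (∀ i j, x i ∈ e i j ∧ y j ∈ e i j) ∧
    ∀ i j i' j', (i, j) ≠ (i', j') →
      e i j ∩ e i' j' = ({x i, y j} : Set V) ∩ {x i', y j'}

section Closure

variable {V : Type u}

/-- One step towards the closure of `A` under the set-valued operation `g`. -/
def closureStep (g : Finset V → Set V) (A : Set V) : Set V :=
  A ∪ ⋃ (S : Finset V) (_ : (S : Set V) ⊆ A), g S

/-- The closure of `A` under the set-valued operation `g`. -/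
def finsetClosure (g : Finset V → Set V) (A : Set V) : Set V :=
  ⋃ m : ULift.{u} ℕ, (closureStep g)^[m.down] A

lemma closureStep_mono (g : Finset V → Set V) : Monotone (closureStep g) := by
  intro A B h
  refine Set.union_subset_union h ?_
  refine Set.iUnion_mono fun S => ?_
  exact Set.iUnion_mono' fun hS => ⟨hS.trans h, le_rfl⟩

lemma finsetClosure_mono (g : Finset V → Set V) : Monotone (finsetClosure g) := fun _ _ h =>
  Set.iUnion_mono fun m => (closureStep_mono g).iterate m.down h

lemma subset_finsetClosure (g : Finset V → Set V) (A : Set V) : A ⊆ finsetClosure g A :=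
  Set.subset_iUnion_of_subset ⟨0⟩ le_rfl

lemma iterate_closureStep_mono (g : Finset V → Set V) (A : Set V) :
    Monotone fun m : ℕ => (closureStep g)^[m] A := by
  refine monotone_nat_of_le_succ fun m => ?_
  rw [Function.iterate_succ_apply']
  exact Set.subset_union_left

lemma subset_finsetClosure_of_subset (g : Finset V → Set V) (A : Set V) (S : Finset V)
    (hS : (S : Set V) ⊆ finsetClosure g A) : g S ⊆ finsetClosure g A := by
  have hm : Monotone fun m : ULift.{u} ℕ => (closureStep g)^[m.down] A := fun a b h =>
    iterate_closureStep_mono g A h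
  obtain ⟨m, hm⟩ := hm.directed_le.exists_mem_subset_of_finset_subset_biUnion hS
  refine Set.subset_iUnion_of_subset ⟨m.down + 1⟩ ?_
  simp only [Function.iterate_succ_apply']
  exact (Set.subset_iUnion₂ (s := fun (S : Finset V) _ => g S) S hm).trans Set.subset_union_right

lemma mk_closureStep_le {g : Finset V → Set V} (hg : ∀ S, (g S).Countable) {A : Set V}
    {c : Cardinal.{u}} (hc : ℵ₀ ≤ c) (hA : #A ≤ c) : #(closureStep g A) ≤ c := by
  have hfin : #(Finset A) ≤ c := by
    cases finite_or_infinite A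
    · exact (Cardinal.mk_le_aleph0).trans hc
    · rwa [mk_finset_of_infinite]
  have hsub : closureStep g A ⊆ A ∪ ⋃ S : Finset A, g (S.map (Function.Embedding.subtype _)) := by
    refine Set.union_subset_union le_rfl (Set.iUnion₂_subset fun S hS => ?_)
    obtain ⟨T, rfl⟩ : ∃ T : Finset A, T.map (Function.Embedding.subtype _) = S := by
      classical
      exact ⟨S.subtype (· ∈ A), Finset.subtype_map_of_mem fun x hx => hS hx⟩
    exact Set.subset_iUnion (fun S : Finset A => g (S.map (Function.Embedding.subtype _))) T
  refine (mk_le_mk_of_subset hsub).trans ((mk_union_le _ _).trans ?_)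
  refine add_le_of_le hc hA ((mk_iUnion_le _).trans ?_)
  exact mul_le_of_le hc hfin ((ciSup_le' fun S => (hg _).le_aleph0).trans hc)

lemma mk_finsetClosure_le {g : Finset V → Set V} (hg : ∀ S, (g S).Countable) {A : Set V}
    {c : Cardinal.{u}} (hc : ℵ₀ ≤ c) (hA : #A ≤ c) : #(finsetClosure g A) ≤ c := by
  refine (mk_iUnion_le _).trans (mul_le_of_le hc (by simpa using hc) (ciSup_le' fun m => ?_))
  induction m.down with
  | zero => exact hA
  | succ m ih =>
    rw [Function.iterate_succ_apply']
    exact mk_closureStep_le hg hc ih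

end Closure

section Orientation

variable {V : Type u}

/-- The subgraph induced on `W` has a well-founded orientation with finite in-degrees. -/
def HasFiniteOrientation (G : SimpleGraph V) (W : Set V) : Prop :=
  ∃ R : V → V → Prop, WellFounded R ∧
    (∀ v ∈ W, ∀ w ∈ W, G.Adj v w → R v w ∨ R w v) ∧ ∀ v, {w | R w v}.Finite

lemma hasFiniteOrientation_of_countable (G : SimpleGraph V) {W : Set V} (hW : W.Countable) :
    HasFiniteOrientation G W := by
  obtain ⟨f, hf⟩ := Set.countable_iff_exists_injOn.1 hW
  refine ⟨fun v w => v ∈ W ∧ f v < f w, ?_, ?_, ?_⟩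
  · exact Subrelation.wf (fun h => h.2) (InvImage.wf f Nat.lt_wfRel.wf)
  · intro v hv w hw h
    rcases lt_trichotomy (f v) (f w) with h' | h' | h'
    · exact Or.inl ⟨hv, h'⟩
    · exact absurd (hf hv hw h') h.ne
    · exact Or.inr ⟨hw, h'⟩
  · intro v
    refine Set.Finite.of_finite_image (f := f) ((Set.finite_lt_nat (f v)).subset ?_) ?_
    · rintro _ ⟨w, hw, rfl⟩
      exact hw.2
    · exact hf.mono fun w hw => hw.1

/-- Orientations of the fibres of a map to a well-order glue together, provided every vertex has
only finitely many neighbours in smaller fibres. -/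
lemma hasFiniteOrientation_of_fibers (G : SimpleGraph V) {W : Set V} {ι : Type*} [LinearOrder ι]
    [WellFoundedLT ι] (a : V → ι) (hfib : ∀ i, HasFiniteOrientation G {v ∈ W | a v = i})
    (hback : ∀ v ∈ W, {w ∈ W | G.Adj v w ∧ a w < a v}.Finite) : HasFiniteOrientation G W := by
  choose R hwf hcov hfin using hfib
  refine ⟨fun w v => (v ∈ W ∧ w ∈ W ∧ G.Adj v w ∧ a w < a v) ∨ (a w = a v ∧ R (a v) w v),
    ?_, ?_, ?_⟩
  · refine Subrelation.wf (r := InvImage (PSigma.Lex (· < ·) fun i => R i)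
      fun v => (⟨a v, v⟩ : Σ' _ : ι, V)) ?_ (InvImage.wf _ (WellFounded.psigma_lex wellFounded_lt hwf))
    intro w v h
    rcases h with h | ⟨h, h'⟩
    · exact PSigma.Lex.left _ _ h.2.2.2
    · simp only [InvImage, h]
      exact PSigma.Lex.right _ h'
  · intro v hv w hw h
    rcases lt_trichotomy (a v) (a w) with h' | h' | h'
    · exact Or.inl (Or.inl ⟨hw, hv, h.symm, h'⟩)
    · rcases hcov (a w) v ⟨hv, h'⟩ w ⟨hw, rfl⟩ h with h'' | h''
      · exact Or.inl (Or.inr ⟨h', h''⟩)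
      · exact Or.inr (Or.inr ⟨h'.symm, h' ▸ h''⟩)
    · exact Or.inr (Or.inl ⟨hv, hw, h, h'⟩)
  · intro v
    by_cases hv : v ∈ W
    · refine ((hback v hv).union (hfin (a v) v)).subset ?_
      rintro w (h | h)
      · exact Or.inl h.2
      · exact Or.inr h.2
    · refine (hfin (a v) v).subset ?_
      rintro w (h | h)
      · exact absurd h.1 hv
      · exact h.2

lemma hasFiniteOrientation (G : SimpleGraph V) (N : ℕ)
    (hG : ∀ S : Finset V, S.card = N → {v | ∀ s ∈ S, G.Adj v s}.Countable) (W : Set V) :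
    HasFiniteOrientation G W := by
  generalize hκ : #W = κ
  induction κ using WellFoundedLT.induction generalizing W with
  | ind κ ih =>
  rcases le_or_gt κ ℵ₀ with hκ0 | hκ0
  · exact hasFiniteOrientation_of_countable G (le_aleph0_iff_set_countable.1 (hκ ▸ hκ0))
  let g : Finset V → Set V := fun S => {v | S.card = N ∧ ∀ s ∈ S, G.Adj v s}
  have hg : ∀ S, (g S).Countable := fun S => by
    by_cases h : S.card = N
    · simpa [g, h] using hG S h
    · simp [g, h]
  obtain ⟨w⟩ : Nonempty (κ.ord.ToType ≃ W) := Cardinal.eq.1 (by simp [hκ])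
  let C : κ.ord.ToType → Set V := fun i => finsetClosure g ((fun j => (w j : V)) '' Set.Iic i)
  have hCmono : Monotone C := fun i j h =>
    finsetClosure_mono g (Set.image_mono (Set.Iic_subset_Iic.2 h))
  have hCcard : ∀ i, #(C i) < κ := fun i => by
    have hlt : #(Set.Iic i) < κ := by
      rw [← Set.Iio_insert]
      exact mk_insert_le.trans_lt (add_lt_of_lt hκ0.le (by simpa using mk_Iio_lt i (by simp))
        (one_lt_aleph0.trans hκ0))
    exact (mk_finsetClosure_le hg (le_max_left ℵ₀ _)
      (mk_image_le.trans (le_max_right _ _))).trans_lt (max_lt hκ0 hlt)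
  have hCW : ∀ v ∈ W, ∃ i, v ∈ C i := fun v hv =>
    ⟨w.symm ⟨v, hv⟩, subset_finsetClosure g _ ⟨w.symm ⟨v, hv⟩, Set.mem_Iic.2 le_rfl, by simp⟩⟩
  have hne : Nonempty κ.ord.ToType := by
    rw [← mk_ne_zero_iff]
    simpa using (aleph0_pos.trans hκ0).ne'
  classical
  let a : V → κ.ord.ToType := fun v =>
    if h : ∃ i, v ∈ C i then wellFounded_lt.min {i | v ∈ C i} h else hne.some
  have ha : ∀ v ∈ W, v ∈ C (a v) := fun v hv => by
    simp only [a, dif_pos (hCW v hv)]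
    exact wellFounded_lt.min_mem {i | v ∈ C i} _
  have hamin : ∀ v ∈ W, ∀ i < a v, v ∉ C i := fun v hv i hi h => by
    simp only [a, dif_pos (hCW v hv)] at hi
    exact wellFounded_lt.not_lt_min {i | v ∈ C i} h hi
  refine hasFiniteOrientation_of_fibers G a (fun i => ?_) (fun v hv => ?_)
  · refine ih _ ?_ _ rfl
    refine (mk_le_mk_of_subset ?_).trans_lt (hCcard i)
    rintro v ⟨hv, rfl⟩
    exact ha v hv
  · by_contra hinf
    obtain ⟨S, hS, hSN⟩ := Set.Infinite.exists_subset_card_eq hinf N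
    have hne' : (Set.Iio (a v)).Nonempty := by
      obtain ⟨x, hx⟩ := Set.Infinite.nonempty hinf
      exact ⟨_, hx.2.2⟩
    have : Nonempty (Set.Iio (a v)) := hne'.to_subtype
    obtain ⟨i, hi⟩ := Directed.exists_mem_subset_of_finset_subset_biUnion
      (f := fun i : Set.Iio (a v) => C i) (s := S)
      (Monotone.directed_le fun i j h => hCmono h)
      (fun x hx => Set.mem_iUnion.2 ⟨⟨a x, (hS hx).2.2⟩, ha x (hS hx).1⟩)
    exact hamin v hv i i.2
      (subset_finsetClosure_of_subset g _ S hi ⟨hSN, fun s hs => (hS hs).2.1⟩)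

/-- Erdős–Hajnal: a graph in which any `N` vertices have only countably many common neighbours
has a proper colouring with countably many colours. -/
theorem exists_nat_coloring (G : SimpleGraph V) (N : ℕ)
    (hG : ∀ S : Finset V, S.card = N → {v | ∀ s ∈ S, G.Adj v s}.Countable) :
    ∃ c : V → ℕ, ∀ v w, G.Adj v w → c v ≠ c w := by
  obtain ⟨R, hwf, hcov, hfin⟩ := hasFiniteOrientation G N hG Set.univ
  have key : ∀ v (f : ∀ w, R w v → ℕ), ∃ m : ℕ, ∀ w h, f w h ≠ m := fun v f => by
    have : Finite {w | R w v} := hfin v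
    obtain ⟨m, hm⟩ := (Set.finite_range fun w : {w | R w v} => f w w.2).exists_notMem
    exact ⟨m, fun w h e => hm ⟨⟨w, h⟩, e⟩⟩
  choose F hF using key
  have hc : ∀ v w, R w v → hwf.fix F w ≠ hwf.fix F v := fun v w h => by
    rw [hwf.fix_eq F v]
    exact hF v (fun y _ => hwf.fix F y) w h
  refine ⟨hwf.fix F, fun v w h => ?_⟩
  rcases hcov v trivial w trivial h with h' | h'
  · exact hc w v h'
  · exact (hc v w h').symm

end Orientation

section Rich

variable {V : Type u}

/-- `T` is `L`-rich in `F` if every set of at most `L` vertices outside `T` can be avoided by a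
member of `F` containing `T`. -/
def IsRich (F : Set (Finset V)) (L : ℕ) (T : Finset V) : Prop :=
  ∀ X : Finset V, X.card ≤ L → Disjoint X T → ∃ e ∈ F, T ⊆ e ∧ Disjoint X e

/-- The inclusion-minimal rich sets among those with at least two elements. -/
def minimalRich (F : Set (Finset V)) (L : ℕ) : Set (Finset V) :=
  {T | Minimal (fun S : Finset V => 2 ≤ S.card ∧ IsRich F L S) T}

lemma mem_minimalRich {F : Set (Finset V)} {L : ℕ} {T : Finset V} :
    T ∈ minimalRich F L ↔ Minimal (fun S : Finset V => 2 ≤ S.card ∧ IsRich F L S) T :=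
  Iff.rfl

lemma exists_minimalRich_subset {F : Set (Finset V)} (L : ℕ) {e : Finset V} (he : e ∈ F)
    (h2 : 2 ≤ e.card) : ∃ T ∈ minimalRich F L, T ⊆ e := by
  obtain ⟨T, hT, hmin⟩ := exists_minimal_le_of_wellFoundedLT
    (fun S : Finset V => 2 ≤ S.card ∧ IsRich F L S) e ⟨h2, fun X _ hX => ⟨e, he, le_rfl, hX⟩⟩
  exact ⟨T, hmin, hT⟩

lemma IsRich.card_le {F : Set (Finset V)} {L k : ℕ} (hF : ∀ e ∈ F, e.card = k) {T : Finset V}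
    (hT : IsRich F L T) : T.card ≤ k := by
  obtain ⟨e, he, hTe, -⟩ := hT ∅ (by simp) (by simp)
  exact (Finset.card_le_card hTe).trans (hF e he).le

variable [DecidableEq V]

/-- Only boundedly many minimal rich sets contain a given set with at least two elements. -/
lemma exists_finset_minimalRich_superset {F : Set (Finset V)} {L k : ℕ}
    (hF : ∀ e ∈ F, e.card = k) (d : ℕ) (S : Finset V) (h2 : 2 ≤ S.card) (hd : k ≤ S.card + d) :
    ∃ A : Finset (Finset V), A.card ≤ (L + 1) ^ d ∧ ∀ e ∈ minimalRich F L, S ⊆ e → e ∈ A := by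
  induction d generalizing S with
  | zero =>
    refine ⟨{S}, by simp, fun e he hSe => ?_⟩
    rw [Finset.mem_singleton]
    exact (Finset.eq_of_subset_of_card_le hSe (((mem_minimalRich.1 he).prop.2.card_le hF).trans (by omega))).symm
  | succ d ih =>
    by_cases hS : IsRich F L S
    · refine ⟨{S}, by simpa using Nat.one_le_pow _ _ (by omega), fun e he hSe => ?_⟩
      rw [Finset.mem_singleton]
      exact le_antisymm ((mem_minimalRich.1 he).le_of_le ⟨h2, hS⟩ hSe) hSe
    · simp only [IsRich, not_forall] at hS
      obtain ⟨X, hXL, hXS, hX⟩ := hS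
      have hstep : ∀ x ∈ X, ∃ A : Finset (Finset V), A.card ≤ (L + 1) ^ d ∧
          ∀ e ∈ minimalRich F L, insert x S ⊆ e → e ∈ A := fun x hx => by
        have hxS : x ∉ S := Finset.disjoint_left.1 hXS hx
        refine ih (insert x S) ?_ ?_ <;> rw [Finset.card_insert_of_notMem hxS] <;> omega
      choose! A hA hAmem using hstep
      refine ⟨X.biUnion A, ?_, fun e he hSe => ?_⟩
      · calc (X.biUnion A).card ≤ X.card * (L + 1) ^ d := Finset.card_biUnion_le_card_mul _ _ _ hA
          _ ≤ (L + 1) * (L + 1) ^ d := Nat.mul_le_mul_right _ (by omega)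
          _ = (L + 1) ^ (d + 1) := by ring
      · obtain ⟨x, hxX, hxe⟩ : ∃ x ∈ X, x ∈ e := by
          by_contra! hdis
          obtain ⟨e', he', hee', hXe'⟩ := (mem_minimalRich.1 he).prop.2 X hXL (Finset.disjoint_left.2 hdis)
          exact hX ⟨e', he', hSe.trans hee', hXe'⟩
        exact Finset.mem_biUnion.2 ⟨x, hxX, hAmem x hxX e he (Finset.insert_subset hxe hSe)⟩

/-- A finite family of rich sets extends to members of `F` without creating new intersections. -/
lemma exists_extension_of_isRich {F : Set (Finset V)} {L k : ℕ} (hF : ∀ e ∈ F, e.card = k)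
    {I : Type*} [Fintype I] [DecidableEq I] (hL : Fintype.card I * k ≤ L) (T : I → Finset V)
    (hT : ∀ i, IsRich F L (T i)) :
    ∃ e : I → Finset V, (∀ i, e i ∈ F) ∧ (∀ i, T i ⊆ e i) ∧
      ∀ i j, i ≠ j → e i ∩ e j = T i ∩ T j := by
  suffices h : ∀ s : Finset I, ∃ e : I → Finset V, (∀ i ∈ s, e i ∈ F) ∧ (∀ i, T i ⊆ e i) ∧
      (∀ i, (e i).card ≤ k) ∧ ∀ i j, i ≠ j → e i ∩ e j = T i ∩ T j by
    obtain ⟨e, h1, h2, -, h3⟩ := h Finset.univ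
    exact ⟨e, fun i => h1 i (Finset.mem_univ i), h2, h3⟩
  intro s
  induction s using Finset.induction_on with
  | empty => exact ⟨T, by simp, fun i => le_rfl, fun i => (hT i).card_le hF, fun i j _ => rfl⟩
  | insert a s has ih =>
    obtain ⟨e, heF, hTe, hek, hint⟩ := ih
    let X : Finset V := (Finset.univ.erase a).biUnion e \ T a
    have hXL : X.card ≤ L := by
      refine (Finset.card_le_card Finset.sdiff_subset).trans
        ((Finset.card_biUnion_le_card_mul _ _ k fun i _ => hek i).trans (le_trans ?_ hL))
      exact Nat.mul_le_mul_right _ (Finset.card_le_univ _)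
    obtain ⟨e', he', hTe', hXe'⟩ := hT a X hXL Finset.sdiff_disjoint
    have hnew : ∀ i, i ≠ a → e' ∩ e i = T a ∩ T i := fun i hi => by
      rw [← hint a i hi.symm]
      ext v
      simp only [Finset.mem_inter]
      refine ⟨fun ⟨hv', hvi⟩ => ⟨hTe a ?_, hvi⟩, fun ⟨hva, hvi⟩ => ⟨hTe' ?_, hvi⟩⟩
      · by_contra hvT
        refine Finset.disjoint_left.1 hXe' (Finset.mem_sdiff.2 ⟨?_, hvT⟩) hv'
        exact Finset.mem_biUnion.2 ⟨i, by simpa using hi, hvi⟩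
      · have : v ∈ e a ∩ e i := Finset.mem_inter.2 ⟨hva, hvi⟩
        rw [hint a i hi.symm] at this
        exact (Finset.mem_inter.1 this).1
    refine ⟨Function.update e a e', fun i hi => ?_, fun i => ?_, fun i => ?_, fun i j hij => ?_⟩
    · rcases eq_or_ne i a with rfl | hia
      · simpa using he'
      · simpa [hia] using heF i (Finset.mem_of_mem_insert_of_ne hi hia)
    · rcases eq_or_ne i a with rfl | hia
      · simpa using hTe'
      · simpa [hia] using hTe i
    · rcases eq_or_ne i a with rfl | hia
      · simpa using (hF e' he').le
      · simpa [hia] using hek i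
    · rcases eq_or_ne i a with rfl | hia
      · simpa [hij.symm] using hnew j hij.symm
      · rcases eq_or_ne j a with rfl | hja
        · simpa [hia, Finset.inter_comm] using hnew i hia
        · simpa [hia, hja] using hint i j hij

end Rich

section BoundedCodegree

/-- A finite set carrying a symmetric relation of degree at most `d` has an independent subset of
proportion `1 / (d + 1)`. -/
lemma exists_independent_subset {α : Type*} [DecidableEq α] (r : α → α → Prop) [DecidableRel r]
    (hr : ∀ x y, r x y → r y x) (d n : ℕ) (X : Finset α)
    (hd : ∀ x ∈ X, {y ∈ X | r x y}.card ≤ d) (hX : n * (d + 1) ≤ X.card) :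
    ∃ I ⊆ X, I.card = n ∧ ∀ x ∈ I, ∀ y ∈ I, x ≠ y → ¬ r x y := by
  induction n generalizing X with
  | zero => exact ⟨∅, by simp, by simp, by simp⟩
  | succ n ih =>
    have hpos : 0 < X.card := lt_of_lt_of_le (by positivity) hX
    obtain ⟨a, ha⟩ := Finset.card_pos.1 hpos
    let B : Finset α := insert a {y ∈ X | r a y}
    have hB : B.card ≤ d + 1 := (Finset.card_insert_le _ _).trans (by have := hd a ha; omega)
    obtain ⟨I, hIX, hIn, hI⟩ := ih (X \ B)
      (fun x hx => (Finset.card_le_card (Finset.filter_subset_filter _ Finset.sdiff_subset)).trans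
        (hd x (Finset.mem_sdiff.1 hx).1))
      (by
        have := Finset.le_card_sdiff B X
        have : (n + 1) * (d + 1) = n * (d + 1) + (d + 1) := by ring
        omega)
    have haI : ∀ y ∈ I, a ≠ y ∧ ¬ r a y := fun y hy => by
      have := Finset.mem_sdiff.1 (hIX hy)
      simp only [B, Finset.mem_insert, Finset.mem_filter, not_or, not_and] at this
      exact ⟨fun h => this.2.1 h.symm, this.2.2 this.1⟩
    refine ⟨insert a I, Finset.insert_subset ha (hIX.trans Finset.sdiff_subset), ?_, ?_⟩
    · rw [Finset.card_insert_of_notMem fun h => (haI a h).1 rfl, hIn]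
    · intro x hx y hy hxy
      rcases Finset.mem_insert.1 hx with rfl | hx' <;> rcases Finset.mem_insert.1 hy with rfl | hy'
      · exact absurd rfl hxy
      · exact (haI y hy').2
      · exact fun h => (haI x hx').2 (hr _ _ h)
      · exact hI x hx' y hy' hxy

variable {V : Type u} [DecidableEq V]

/-- The graph of pairs of distinct vertices covered by a member of `F`. -/
def shadowGraph (F : Set (Finset V)) : SimpleGraph V where
  Adj x y := x ≠ y ∧ ∃ e ∈ F, x ∈ e ∧ y ∈ e
  symm := ⟨fun _ _ ⟨h, e, he, hx, hy⟩ => ⟨h.symm, e, he, hy, hx⟩⟩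
  loopless := ⟨fun _ h => h.1 rfl⟩

/-- In a family of bounded codegree, a complete bipartite subgraph of the shadow with one large and
one infinite side contains the shadow of an expansion of `K_{n,n}`. -/
lemma exists_expansion_of_infinite {F : Set (Finset V)} {k m n : ℕ} (hF : ∀ e ∈ F, e.card ≤ k)
    (hm : ∀ x y : V, x ≠ y → ∃ A : Finset (Finset V), A.card ≤ m ∧
      ∀ e ∈ F, x ∈ e → y ∈ e → e ∈ A)
    (X : Finset V) (hX : X.card = n * (k * m + 1))
    (hY : {y | ∀ x ∈ X, (shadowGraph F).Adj y x}.Infinite) :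
    ∃ (x y : Fin n → V) (e : Fin n → Fin n → Finset V),
      Function.Injective (Sum.elim x y) ∧ (∀ i j, e i j ∈ F) ∧
      (∀ i j, x i ∈ e i j ∧ y j ∈ e i j) ∧
      ∀ i j i' j', (i, j) ≠ (i', j') → e i j ∩ e i' j' ⊆ {x i, y j} ∩ {x i', y j'} := by
  classical
  set Y := {y | ∀ x ∈ X, (shadowGraph F).Adj y x}
  have hedge : ∀ x ∈ X, ∀ y ∈ Y, ∃ e ∈ F, x ∈ e ∧ y ∈ e := fun x hx y hy => by
    obtain ⟨-, e, he, h1, h2⟩ := hy x hx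
    exact ⟨e, he, h2, h1⟩
  have hYX : ∀ y ∈ Y, ∀ x ∈ X, x ≠ y := fun y hy x hx => (hy x hx).1.symm
  choose! e heF hex hey using hedge
  have hbad : ∀ D : Finset V, {y ∈ Y | ∃ x ∈ X, ∃ d ∈ D, d ≠ x ∧ d ∈ e x y}.Finite := fun D => by
    choose! A _ hA using hm
    refine (Finset.finite_toSet (X.biUnion fun x => D.biUnion fun d =>
      (A x d).biUnion id)).subset ?_
    rintro y ⟨hy, x, hx, d, hd, hdx, hde⟩
    simp only [Finset.coe_biUnion, Set.mem_iUnion, Finset.mem_coe]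
    exact ⟨x, hx, d, hd, e x y, hA x d hdx.symm _ (heF x hx y hy) (hex x hx y hy) hde,
      hey x hx y hy⟩
  let Y₁ : Set V := {y ∈ Y | ∀ x ∈ X, ∀ d ∈ X, d ∈ e x y → d = x}
  have hY₁ : Y₁.Infinite := by
    refine (hY.sdiff (hbad X)).mono ?_
    rintro y ⟨hy, hy'⟩
    refine ⟨hy, fun x hx d hd hde => ?_⟩
    by_contra hdx
    exact hy' ⟨hy, x, hx, d, hd, hdx, hde⟩
  have hind : ∀ y ∈ Y₁, ∃ I ∈ X.powerset, I.card = n ∧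
      ∀ x ∈ I, ∀ x' ∈ I, x ≠ x' → e x y ∩ e x' y ⊆ {y} := fun y hy => by
    obtain ⟨I, hIX, hIn, hI⟩ := exists_independent_subset
      (fun x x' => ¬ e x y ∩ e x' y ⊆ {y}) (fun x x' h => by rwa [Finset.inter_comm]) (k * m) n X
      (fun x hx => by
        choose! A hAm hA using hm
        have hsub : ({x' ∈ X | ¬ e x y ∩ e x' y ⊆ {y}}).image (fun x' => e x' y) ⊆
            ((e x y).erase y).biUnion fun w => A w y := by
          intro f hf
          simp only [Finset.mem_image, Finset.mem_filter, Finset.not_subset, Finset.mem_inter,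
            Finset.mem_singleton] at hf
          obtain ⟨x', ⟨hx', w, ⟨hw, hw'⟩, hwy⟩, rfl⟩ := hf
          refine Finset.mem_biUnion.2 ⟨w, Finset.mem_erase.2 ⟨hwy, hw⟩, ?_⟩
          exact hA w y hwy _ (heF x' hx' y hy.1) hw' (hey x' hx' y hy.1)
        have hinj : Set.InjOn (fun x' => e x' y)
            ({x' ∈ X | ¬ e x y ∩ e x' y ⊆ {y}} : Finset V) := by
          intro a ha b hb hab
          have haX := (Finset.mem_filter.1 (Finset.mem_coe.1 ha)).1
          have hbX := (Finset.mem_filter.1 (Finset.mem_coe.1 hb)).1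
          exact hy.2 b hbX a haX (by rw [← show e a y = e b y from hab]; exact hex a haX y hy.1)
        rw [← Finset.card_image_of_injOn hinj]
        refine (Finset.card_le_card hsub).trans ((Finset.card_biUnion_le_card_mul _ _ m
          fun w hw => hAm w y (Finset.mem_erase.1 hw).1).trans (Nat.mul_le_mul_right _ ?_))
        exact Finset.card_erase_le.trans (hF _ (heF x hx y hy.1)))
      hX.ge
    exact ⟨I, Finset.mem_powerset.2 hIX, hIn, fun x hx x' hx' h => not_not.1 (hI x hx x' hx' h)⟩
  choose! J hJX hJn hJ using hind
  obtain ⟨I, hIX, hI⟩ : ∃ I ∈ X.powerset, {y ∈ Y₁ | J y = I}.Infinite := by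
    by_contra! hfin
    refine hY₁ ((X.powerset.finite_toSet.biUnion fun I hI => hfin I hI).subset fun y hy => ?_)
    exact Set.mem_biUnion (hJX y hy) ⟨hy, rfl⟩
  obtain ⟨y₀, hy₀, hy₀I⟩ := hI.nonempty
  have hIn : I.card = n := hy₀I ▸ hJn y₀ hy₀
  have hIX' : ∀ {x}, x ∈ I → x ∈ X := fun hx => Finset.mem_powerset.1 hIX hx
  obtain ⟨y, hyI, hylt⟩ := exists_seq_of_forall_finset_exists (fun y => y ∈ Y₁ ∧ J y = I)
    (fun y y' => y ≠ y' ∧ ∀ x ∈ X, ∀ x' ∈ X, e x y ∩ e x' y' ⊆ {x'}) (fun s _ => by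
      obtain ⟨y', ⟨hy', hyI'⟩, hgood⟩ := (hI.sdiff ((hbad (s.biUnion fun y =>
        X.biUnion fun x => e x y)).union s.finite_toSet)).nonempty
      refine ⟨y', ⟨hy', hyI'⟩, fun y hy => ⟨?_, fun x hx x' hx' d hd => ?_⟩⟩
      · rintro rfl
        exact hgood (Or.inr hy)
      · rw [Finset.mem_inter] at hd
        by_contra hdx
        refine hgood (Or.inl ⟨hy'.1, x', hx', d, ?_, by simpa using hdx, hd.2⟩)
        exact Finset.mem_biUnion.2 ⟨y, hy, Finset.mem_biUnion.2 ⟨x, hx, hd.1⟩⟩)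
  have hyinj : Function.Injective y := Function.Injective.of_lt_imp_ne fun a b h => (hylt a b h).1
  let x : Fin n → V := fun i => (I.equivFinOfCardEq hIn).symm i
  have hxI : ∀ i, x i ∈ I := fun i => ((I.equivFinOfCardEq hIn).symm i).2
  have hxinj : Function.Injective x :=
    Subtype.val_injective.comp (I.equivFinOfCardEq hIn).symm.injective
  have hyY : ∀ j, y j ∈ Y := fun j => (hyI j).1.1
  have hlt : ∀ (i i' : Fin n) (a b : ℕ), a < b →
      e (x i) (y a) ∩ e (x i') (y b) ⊆ {x i, y a} ∩ {x i', y b} := fun i i' a b hab d hd => by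
    have hdx : d = x i' := by
      simpa using (hylt a b hab).2 _ (hIX' (hxI i)) _ (hIX' (hxI i')) hd
    have hdx' : d = x i := (hyI a).1.2 _ (hIX' (hxI i)) d (hdx ▸ hIX' (hxI i'))
      (Finset.mem_inter.1 hd).1
    simp [← hdx, ← hdx']
  refine ⟨x, fun j => y j, fun i j => e (x i) (y j), ?_, fun i j => heF _ (hIX' (hxI i)) _ (hyY j),
    fun i j => ⟨hex _ (hIX' (hxI i)) _ (hyY j), hey _ (hIX' (hxI i)) _ (hyY j)⟩, ?_⟩
  · exact hxinj.sumElim (hyinj.comp Fin.val_injective) fun i j => hYX _ (hyY j) _ (hIX' (hxI i))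
  · intro i j i' j' hne
    rcases lt_trichotomy (j : ℕ) j' with h | h | h
    · exact hlt i i' j j' h
    · obtain rfl := Fin.ext h
      have hii : x i ≠ x i' := fun h => hne (by rw [hxinj h])
      intro d hd
      have : d = y j := by
        simpa using hJ (y j) (hyI j).1 _ ((hyI j).2 ▸ hxI i) _ ((hyI j).2 ▸ hxI i') hii hd
      simp [this]
    · rw [Finset.inter_comm, Finset.inter_comm {x i, y j}]
      exact hlt i' i j' j h

end BoundedCodegree

/-- A hypergraph of uncountable chromatic number has no proper colouring by natural numbers. -/
lemma not_isProperColoring_nat {V : Type u} {E : Set (Set V)}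
    (hChr : Cardinal.aleph 1 ≤ chromaticNumber V E) (c : V → ℕ) : ¬ IsProperColoring E c := by
  intro hc
  have hle : chromaticNumber V E ≤ ℵ₀ := by
    refine csInf_le' ⟨ULift.{u} ℕ, fun v => ⟨c v⟩, by simp, fun e he => ?_⟩
    obtain ⟨x, hx, y, hy, hxy⟩ := hc e he
    exact ⟨x, hx, y, hy, fun h => hxy (congrArg ULift.down h)⟩
  exact absurd (hChr.trans hle) (not_le.2 aleph0_lt_aleph_one)

/-- **Theorem 1.2.** For all integers `k ≥ 2` and `n ≥ 1`, the `k`-uniform expansion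
`K^{(k)}_{n,n}` is obligatory: every `k`-uniform hypergraph of chromatic number at
least `ℵ₁` contains a copy of `K^{(k)}_{n,n}`. -/
theorem expansion_Knn_obligatory (k n : ℕ) (hk : 2 ≤ k) (hn : 1 ≤ n)
    (V : Type u) (E : Set (Set V)) (hUnif : ∀ e ∈ E, e.ncard = k)
    (hChr : Cardinal.aleph 1 ≤ chromaticNumber V E) :
    ContainsExpansionKnn k n E := by
  classical
  let F : Set (Finset V) := {s | (s : Set V) ∈ E}
  have hF : ∀ e ∈ F, e.card = k := fun e he => by
    simpa using hUnif e he
  let L := Fintype.card (Fin n × Fin n) * k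
  let M := minimalRich F L
  let m := (L + 1) ^ k
  obtain ⟨X, hXcard, hX⟩ : ∃ X : Finset V, X.card = n * (k * m + 1) ∧
      {y | ∀ x ∈ X, (shadowGraph M).Adj y x}.Infinite := by
    by_contra! hfin
    obtain ⟨c, hc⟩ := exists_nat_coloring (shadowGraph M) (n * (k * m + 1)) fun S hS =>
      (hfin S hS).countable
    refine not_isProperColoring_nat hChr c fun e he => ?_
    have hefin : e.Finite := Set.finite_of_ncard_pos (by rw [hUnif e he]; omega)
    lift e to Finset V using hefin
    obtain ⟨T, hT, hTe⟩ := exists_minimalRich_subset L (show e ∈ F from he) (by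
      rw [hF e he]; exact hk)
    obtain ⟨x, hx, y, hy, hxy⟩ := Finset.one_lt_card.1 (mem_minimalRich.1 hT).prop.1
    exact ⟨x, hTe hx, y, hTe hy, hc x y ⟨hxy, T, hT, hx, hy⟩⟩
  obtain ⟨x, y, T, hinj, hTM, hxy, hint⟩ := exists_expansion_of_infinite (F := M) (k := k)
    (m := m) (fun e he => (mem_minimalRich.1 he).prop.2.card_le hF)
    (fun x y hxy => by
      obtain ⟨A, hA, hmem⟩ := exists_finset_minimalRich_superset (L := L) hF k {x, y}
        (by rw [Finset.card_pair hxy]) (by omega)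
      exact ⟨A, hA, fun e he hx hy => hmem e he (by simp [Finset.insert_subset_iff, hx, hy])⟩)
    X hXcard hX
  obtain ⟨e, heF, hTe, heint⟩ := exists_extension_of_isRich hF le_rfl
    (fun p : Fin n × Fin n => T p.1 p.2) fun p => (mem_minimalRich.1 (hTM p.1 p.2)).prop.2
  have hmem : ∀ i j, x i ∈ e (i, j) ∧ y j ∈ e (i, j) := fun i j =>
    ⟨hTe (i, j) (hxy i j).1, hTe (i, j) (hxy i j).2⟩
  refine ⟨x, y, fun i j => (e (i, j) : Set V), hinj, fun i j => heF (i, j), hmem, ?_⟩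
  intro i j i' j' hne
  apply Set.Subset.antisymm
  · have h : e (i, j) ∩ e (i', j') ⊆ {x i, y j} ∩ {x i', y j'} :=
      (heint _ _ hne).trans_subset (hint i j i' j' hne)
    simpa using Finset.coe_subset.2 h
  · refine Set.inter_subset_inter ?_ ?_ <;> simp [Set.insert_subset_iff, hmem]
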